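/- Let X ⊆ ℕ^d be a monotone set and Q a complex polynomial in d variables with Q(M_z^X) ≠ 0. Then there exists a multiplier ψ of H_d such that ‖ψ‖_{M(H_d)} ≤ ‖Q(M_z^X)‖ and M_ψ^*|_{H_d(X)} = (Q(M_z^X))^*; consequently ‖Q(M_z^X)‖ = ‖M_ψ|_{H_d(X)}‖. -/

import Mathlib

open scoped BigOperators ComplexConjugate

noncomputable section

namespace DruryArveson

/-- Multi-indices. -/
abbrev Idx (d : ℕ) := Fin d → ℕ

/-- The weight `β(n) = |n|!/n!`. -/
def beta (d : ℕ) (n : Idx d) : ℝ :=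
  ((∑ j, n j).factorial : ℝ) / ∏ j, ((n j).factorial : ℝ)

/-- standard basis multi-index `e_j`. -/
def e (d : ℕ) (j : Fin d) : Idx d := fun i => if i = j then 1 else 0

/-- A set `X ⊆ ℕ^d` is monotone if its complement is shift invariant. -/
def MonotoneSet (d : ℕ) (X : Set (Idx d)) : Prop :=
  ∀ n, n ∉ X → ∀ j, n + e d j ∉ X

/-- membership in the Drury–Arveson space (coefficientwise). -/
def MemHd (d : ℕ) (a : Idx d → ℂ) : Prop :=
  Summable fun n => ‖a n‖ ^ 2 / beta d n

/-- the Drury–Arveson norm. -/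
def hdNorm (d : ℕ) (a : Idx d → ℂ) : ℝ :=
  Real.sqrt (∑' n, ‖a n‖ ^ 2 / beta d n)

/-- the Drury–Arveson inner product. -/
def hdInner (d : ℕ) (a b : Idx d → ℂ) : ℂ :=
  ∑' n, a n * conj (b n) / (beta d n : ℂ)

/-- membership in `H_d(X)`. -/
def MemHdX (d : ℕ) (X : Set (Idx d)) (a : Idx d → ℂ) : Prop :=
  (∀ n ∉ X, a n = 0) ∧ MemHd d a

/-- membership in `ℓ²(X, β)`. -/
def MemL2 (d : ℕ) (X : Set (Idx d)) (g : Idx d → ℂ) : Prop :=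
  (∀ n ∉ X, g n = 0) ∧ Summable fun n => ‖g n‖ ^ 2 * beta d n

/-- the norm of `ℓ²(ℕ^d, β)`. -/
def l2Norm (d : ℕ) (g : Idx d → ℂ) : ℝ :=
  Real.sqrt (∑' n, ‖g n‖ ^ 2 * beta d n)

/-- the inner product of `ℓ²(ℕ^d, β)`. -/
def l2Inner (d : ℕ) (g h : Idx d → ℂ) : ℂ :=
  ∑' n, g n * conj (h n) * (beta d n : ℂ)

/-- the compressed backshift `B_j^X = P_X B_j|_{ℓ²(X,β)}`. -/
def BXop (d : ℕ) (X : Set (Idx d)) (j : Fin d) (g : Idx d → ℂ) : Idx d → ℂ :=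
  X.indicator fun n => g (n + e d j)

/-- ordered power `(T_1)^{k_1} ∘ ⋯ ∘ (T_d)^{k_d}` of a `d`-tuple of maps. -/
def opPow (d : ℕ) {α : Type*} (T : Fin d → (α → α)) (k : Idx d) : α → α :=
  (List.ofFn fun j => (T j)^[k j]).foldr (· ∘ ·) id

/-- multiplication by `z_j` on coefficients. -/
def Mop (d : ℕ) (j : Fin d) (a : Idx d → ℂ) : Idx d → ℂ :=
  fun n => if 0 < n j then a (n - e d j) else 0

/-- the compressed multiplication `M_j^X = P_X M_j|_{H_d(X)}`. -/
def MopX (d : ℕ) (X : Set (Idx d)) (j : Fin d) (a : Idx d → ℂ) : Idx d → ℂ :=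
  X.indicator (Mop d j a)

/-- the Taylor coefficients of a polynomial of `d` variables. -/
def Qhat (d : ℕ) (Q : MvPolynomial (Fin d) ℂ) (n : Idx d) : ℂ :=
  Q.coeff (Finsupp.equivFunOnFinite.symm n)

/-- `Q(T)` for a `d`-tuple of maps on the coefficient space. -/
def polyOp (d : ℕ) (Q : MvPolynomial (Fin d) ℂ)
    (T : Fin d → ((Idx d → ℂ) → (Idx d → ℂ))) (a : Idx d → ℂ) : Idx d → ℂ :=
  fun n => ∑ k ∈ Q.support, Q.coeff k * opPow d T (⇑k) a n

/-- operator norm of a map with respect to the `ℓ²(X,β)` norm. -/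
def opNormL2 (d : ℕ) (X : Set (Idx d)) (T : (Idx d → ℂ) → (Idx d → ℂ)) : ℝ :=
  sInf {C | 0 ≤ C ∧ ∀ g, MemL2 d X g → l2Norm d (T g) ≤ C * l2Norm d g}

/-- operator norm of a map with respect to the `H_d(X)` norm. -/
def opNormHdX (d : ℕ) (X : Set (Idx d)) (T : (Idx d → ℂ) → (Idx d → ℂ)) : ℝ :=
  sInf {C | 0 ≤ C ∧ ∀ a, MemHdX d X a → hdNorm d (T a) ≤ C * hdNorm d a}

/-- coefficients of the product `φ · f` of two power series. -/
def mconv (d : ℕ) (φ a : Idx d → ℂ) (m : Idx d) : ℂ :=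
  ∑ k ∈ Finset.Iic m, φ k * a (m - k)

/-- `φ` is a multiplier of `H_d`. -/
def IsMultiplier (d : ℕ) (φ : Idx d → ℂ) : Prop :=
  ∀ a, MemHd d a → MemHd d (mconv d φ a)

/-- the multiplier norm `‖φ‖_{M(H_d)}`. -/
def multNorm (d : ℕ) (φ : Idx d → ℂ) : ℝ :=
  sInf {C | 0 ≤ C ∧ ∀ a, MemHd d a → hdNorm d (mconv d φ a) ≤ C * hdNorm d a}

/-- `A^n = A_1^{n_1} ⋯ A_d^{n_d}` for a tuple of bounded operators. -/
def ApowCLM (d : ℕ) {H : Type*} [NormedAddCommGroup H] [NormedSpace ℂ H]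
    (A : Fin d → H →L[ℂ] H) (n : Idx d) : H →L[ℂ] H :=
  (List.ofFn fun j => A j ^ n j).prod

/-- `Q(A) = ∑ c_k A^k` for a tuple of bounded operators. -/
def QevalCLM (d : ℕ) {H : Type*} [NormedAddCommGroup H] [NormedSpace ℂ H]
    (A : Fin d → H →L[ℂ] H) (Q : MvPolynomial (Fin d) ℂ) : H →L[ℂ] H :=
  ∑ k ∈ Q.support, Q.coeff k • ApowCLM d A ⇑k

/-- monomial `z^n`. -/
def mpow (d : ℕ) (z : Fin d → ℂ) (n : Idx d) : ℂ := ∏ j, z j ^ n j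


section helpers

open scoped Classical

/-! ### Weights -/

lemma beta_pos (d : ℕ) (n : Idx d) : 0 < beta d n := by
  unfold beta; positivity

lemma e_le_iff (d : ℕ) (j : Fin d) (n : Idx d) : e d j ≤ n ↔ 0 < n j := by
  constructor
  · intro h
    have := h j
    simp [e] at this; omega
  · intro h i
    by_cases hi : i = j
    · subst hi; simp [e]; omega
    · simp [e, hi]

lemma sum_e (d : ℕ) (j : Fin d) : ∑ i, e d j i = 1 := by simp [e]

lemma prod_fact_add_e (d : ℕ) (n : Idx d) (j : Fin d) :
    ∏ i, (((n + e d j) i).factorial : ℝ) = (n j + 1) * ∏ i, ((n i).factorial : ℝ) := by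
  rw [← Finset.mul_prod_erase _ (fun i => (((n + e d j) i).factorial : ℝ)) (Finset.mem_univ j),
    ← Finset.mul_prod_erase _ (fun i => ((n i).factorial : ℝ)) (Finset.mem_univ j)]
  have : ∏ x ∈ Finset.univ.erase j, (((n + e d j) x).factorial : ℝ)
      = ∏ x ∈ Finset.univ.erase j, ((n x).factorial : ℝ) := by
    refine Finset.prod_congr rfl fun x hx => ?_
    have := Finset.ne_of_mem_erase hx
    simp [e, this]
  rw [this]
  simp [e, Nat.factorial_succ]
  ring

lemma beta_add_e (d : ℕ) (n : Idx d) (j : Fin d) :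
    beta d (n + e d j) * (n j + 1) = beta d n * ((∑ i, n i : ℕ) + 1) := by
  unfold beta
  rw [prod_fact_add_e]
  have h1 : ∑ i, (n + e d j) i = (∑ i, n i) + 1 := by
    simp only [Pi.add_apply, Finset.sum_add_distrib, sum_e]
  rw [h1, Nat.factorial_succ]
  have : (∏ i, ((n i).factorial : ℝ)) ≠ 0 := by positivity
  have : (n j + 1 : ℝ) ≠ 0 := by positivity
  field_simp
  push_cast
  ring

lemma beta_pascal (d : ℕ) (m : Idx d) (hm : m ≠ 0) :
    ∑ j, (if e d j ≤ m then beta d (m - e d j) else 0) = beta d m := by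
  have key : ∀ j, (if e d j ≤ m then beta d (m - e d j) else 0) * ((∑ i, m i : ℕ) : ℝ)
      = beta d m * m j := by
    intro j
    split_ifs with h
    · have h2 := beta_add_e d (m - e d j) j
      rw [tsub_add_cancel_of_le h] at h2
      have h3 : ((m - e d j) j : ℝ) + 1 = m j := by
        have := (e_le_iff d j m).1 h
        have : (m - e d j) j + 1 = m j := by simp [e]; omega
        exact_mod_cast this
      have h4 : ((∑ i, (m - e d j) i : ℕ) : ℝ) + 1 = ((∑ i, m i : ℕ) : ℝ) := by
        have : (∑ i, (m - e d j) i) + 1 = ∑ i, m i := by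
          conv_rhs => rw [← tsub_add_cancel_of_le h]
          simp only [Pi.add_apply, Finset.sum_add_distrib, sum_e]
        exact_mod_cast this
      rw [h3, h4] at h2
      exact h2.symm
    · have : m j = 0 := by
        by_contra h'
        exact h ((e_le_iff d j m).2 (Nat.pos_of_ne_zero h'))
      simp [this]
  have hpos : 0 < ∑ i, m i := by
    by_contra h
    apply hm
    have : ∑ i, m i = 0 := by omega
    funext i
    exact (Finset.sum_eq_zero_iff.1 this) i (Finset.mem_univ i)
  have hpos' : ((∑ i, m i : ℕ) : ℝ) ≠ 0 := by exact_mod_cast hpos.ne'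
  apply mul_right_cancel₀ hpos'
  rw [Finset.sum_mul, Finset.sum_congr rfl fun j _ => key j, ← Finset.mul_sum]
  push_cast; rfl

lemma beta_zero (d : ℕ) : beta d 0 = 1 := by simp [beta]

lemma beta_le_add_e (d : ℕ) (n : Idx d) (j : Fin d) : beta d n ≤ beta d (n + e d j) := by
  have hne : n + e d j ≠ 0 := by
    intro h
    have := congrFun h j
    simp [e] at this
  rw [← beta_pascal d _ hne]
  refine le_trans ?_ (Finset.single_le_sum (f := fun i =>
    (if e d i ≤ n + e d j then beta d (n + e d j - e d i) else 0)) ?_ (Finset.mem_univ j))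
  · simp
  · intro i _
    split_ifs
    · exact (beta_pos d _).le
    · exact le_rfl

/-- induction on multi-indices. -/
lemma idx_induction {d : ℕ} {p : Idx d → Prop} (h0 : p 0)
    (hs : ∀ n j, p n → p (n + e d j)) : ∀ n, p n := by
  have : ∀ s, ∀ n : Idx d, ∑ i, n i = s → p n := by
    intro s
    induction s with
    | zero =>
      intro n hn
      have : n = 0 := by
        funext i
        exact (Finset.sum_eq_zero_iff.1 hn) i (Finset.mem_univ i)
      rwa [this]
    | succ s ih =>
      intro n hn
      obtain ⟨j, hj⟩ : ∃ j, 0 < n j := by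
        by_contra! h
        have : ∑ i, n i = 0 := Finset.sum_eq_zero fun i _ => Nat.le_zero.1 (h i)
        omega
      have hle := (e_le_iff d j n).2 hj
      rw [← tsub_add_cancel_of_le hle]
      apply hs
      apply ih
      have h1 : ∑ i, n i = ∑ i, (n - e d j) i + 1 := by
        conv_lhs => rw [← tsub_add_cancel_of_le hle]
        simp only [Pi.add_apply, Finset.sum_add_distrib, sum_e]
      omega
  exact fun n => this _ n rfl

lemma beta_le_add (d : ℕ) (n k : Idx d) : beta d n ≤ beta d (n + k) := by
  induction k using idx_induction with
  | h0 => simp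
  | hs k j ih => rw [← add_assoc]; exact ih.trans (beta_le_add_e d _ j)

lemma monotone_add {d : ℕ} {X : Set (Idx d)} (hX : MonotoneSet d X) (n k : Idx d)
    (hn : n ∉ X) : n + k ∉ X := by
  induction k using idx_induction with
  | h0 => simpa
  | hs k j ih => rw [← add_assoc]; exact hX _ ih j

lemma monotone_le {d : ℕ} {X : Set (Idx d)} (hX : MonotoneSet d X) {n m : Idx d}
    (h : n ≤ m) (hm : m ∈ X) : n ∈ X := by
  by_contra hn
  have := monotone_add hX n (m - n) hn
  rw [add_tsub_cancel_of_le h] at this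
  exact this hm

/-! ### Reindexing -/

lemma sum_shift {d : ℕ} {M : Type*} [AddCommMonoid M] (b l : Idx d) (h : Idx d → M)
    (hh : ∀ n, ¬ n + l ≤ b → h n = 0) :
    ∑ n ∈ Finset.Iic b, (if l ≤ n then h (n - l) else 0) = ∑ n ∈ Finset.Iic b, h n := by
  rw [← Finset.sum_filter]
  have : ∑ n ∈ Finset.Iic b, h n = ∑ n ∈ (Finset.Iic b).filter (fun n => n + l ≤ b), h n := by
    rw [Finset.sum_filter]
    refine Finset.sum_congr rfl fun n _ => ?_
    split_ifs with h1
    · rfl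
    · exact hh n h1
  rw [this]
  refine Finset.sum_bij' (fun n _ => n - l) (fun n _ => n + l) ?_ ?_ ?_ ?_ ?_
  · intro n hn
    simp only [Finset.mem_filter, Finset.mem_Iic] at hn ⊢
    exact ⟨tsub_le_self.trans hn.1, by rw [tsub_add_cancel_of_le hn.2]; exact hn.1⟩
  · intro n hn
    simp only [Finset.mem_filter, Finset.mem_Iic] at hn ⊢
    exact ⟨hn.2, le_add_self⟩
  · intro n hn
    simp only [Finset.mem_filter, Finset.mem_Iic] at hn ⊢
    exact tsub_add_cancel_of_le hn.2
  · intro n hn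
    simp
  · intro n hn; rfl

/-- The adjoint of multiplication by `φ` on functions living on the box `Iic b`. -/
def adj {d : ℕ} (b : Idx d) (φ F : Idx d → ℂ) (l : Idx d) : ℂ :=
  ∑ k ∈ Finset.Iic b, conj (φ k) * F (k + l)

lemma adj_off {d : ℕ} (b : Idx d) (φ F : Idx d → ℂ) (hF : ∀ n, ¬ n ≤ b → F n = 0)
    (l : Idx d) (hl : ¬ l ≤ b) : adj b φ F l = 0 := by
  refine Finset.sum_eq_zero fun k _ => ?_
  rw [hF _ (fun h => hl (le_trans le_add_self h)), mul_zero]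

lemma adj_offX {d : ℕ} {X : Set (Idx d)} (hX : MonotoneSet d X)
    (b : Idx d) (φ F : Idx d → ℂ) (hF : ∀ n ∉ X, F n = 0)
    (l : Idx d) (hl : l ∉ X) : adj b φ F l = 0 := by
  refine Finset.sum_eq_zero fun k _ => ?_
  rw [hF _ (by rw [add_comm]; exact monotone_add hX _ _ hl), mul_zero]

lemma duality {d : ℕ} (b : Idx d) (φ a F : Idx d → ℂ) (hF : ∀ n, ¬ n ≤ b → F n = 0) :
    ∑ n ∈ Finset.Iic b, mconv d φ a n * conj (F n)
      = ∑ l ∈ Finset.Iic b, a l * conj (adj b φ F l) := by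
  have h1 : ∀ n ∈ Finset.Iic b, mconv d φ a n * conj (F n)
      = ∑ k ∈ Finset.Iic b, (if k ≤ n then φ k * a (n - k) * conj (F (n - k + k)) else 0) := by
    intro n hn
    rw [mconv, Finset.sum_mul, ← Finset.sum_filter]
    have : (Finset.Iic b).filter (fun k => k ≤ n) = Finset.Iic n := by
      ext k
      simp only [Finset.mem_filter, Finset.mem_Iic] at hn ⊢
      exact ⟨fun h => h.2, fun h => ⟨h.trans hn, h⟩⟩
    rw [this]
    refine Finset.sum_congr rfl fun k hk => ?_
    rw [tsub_add_cancel_of_le (Finset.mem_Iic.1 hk)]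
  rw [Finset.sum_congr rfl h1, Finset.sum_comm]
  have h2 : ∀ k ∈ Finset.Iic b,
      ∑ n ∈ Finset.Iic b, (if k ≤ n then φ k * a (n - k) * conj (F (n - k + k)) else 0)
      = ∑ n ∈ Finset.Iic b, φ k * a n * conj (F (n + k)) := by
    intro k _
    refine sum_shift b k (fun n => φ k * a n * conj (F (n + k))) fun n hn => ?_
    simp [hF _ hn]
  rw [Finset.sum_congr rfl h2, Finset.sum_comm]
  refine Finset.sum_congr rfl fun l _ => ?_
  rw [adj, map_sum, Finset.mul_sum]
  refine Finset.sum_congr rfl fun k _ => ?_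
  simp [add_comm l k]
  ring
/-! ### Hilbert space tools -/

lemma exists_gram {ι : Type} (G : ι → ι → ℂ) (herm : ∀ i j, conj (G j i) = G i j)
    (pos : ∀ F : ι →₀ ℂ, 0 ≤ (F.sum fun i z => F.sum fun j w => conj z * w * G i j).re) :
    ∃ (K : Type) (_ : NormedAddCommGroup K) (_ : InnerProductSpace ℂ K) (_ : CompleteSpace K)
      (v : ι → K), ∀ i j, inner ℂ (v i) (v j) = G i j := by
  let core : PreInnerProductSpace.Core ℂ (ι →₀ ℂ) :=
    { inner := fun f g => f.sum fun i z => g.sum fun j w => conj z * w * G i j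
      conj_inner_symm := fun f g => by
        rw [Finsupp.sum_comm]
        simp only [map_finsuppSum]
        congr! 4
        simp only [map_mul, Complex.conj_conj, herm]
        funext a b
        ring
      add_left := fun _ _ _ => by
        rw [Finsupp.sum_add_index'] <;> simp [← Finsupp.sum_add, add_mul]
      smul_left := fun _ _ _ => by
        rw [Finsupp.sum_smul_index] <;> simp [Finsupp.mul_sum, ← mul_assoc]
      re_inner_nonneg := pos }
  let : SeminormedAddCommGroup (ι →₀ ℂ) :=
    @InnerProductSpace.Core.toSeminormedAddCommGroup ℂ (ι →₀ ℂ) _ _ _ core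
  let : InnerProductSpace ℂ (ι →₀ ℂ) := InnerProductSpace.ofCore core
  refine ⟨UniformSpace.Completion (ι →₀ ℂ), inferInstance, inferInstance, inferInstance,
    fun i => ((Finsupp.single i (1 : ℂ) : ι →₀ ℂ) : UniformSpace.Completion (ι →₀ ℂ)), ?_⟩
  intro i j
  rw [UniformSpace.Completion.inner_coe]
  change (Finsupp.single i (1 : ℂ)).sum (fun i z =>
    (Finsupp.single j (1 : ℂ)).sum fun j w => conj z * w * G i j) = _
  simp

lemma exists_contraction {P E₁ E₂ : Type*} [AddCommGroup P] [Module ℂ P]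
    [NormedAddCommGroup E₁] [InnerProductSpace ℂ E₁] [CompleteSpace E₁]
    [NormedAddCommGroup E₂] [InnerProductSpace ℂ E₂] [CompleteSpace E₂]
    (α : P →ₗ[ℂ] E₁) (β : P →ₗ[ℂ] E₂) (h : ∀ p, ‖β p‖ ≤ ‖α p‖) :
    ∃ V : E₁ →L[ℂ] E₂, (∀ x, ‖V x‖ ≤ ‖x‖) ∧ ∀ p, V (α p) = β p := by
  let R : Submodule ℂ E₁ := (LinearMap.range α).topologicalClosure
  have hmem : ∀ p, α p ∈ R := fun p =>
    Submodule.le_topologicalClosure _ (LinearMap.mem_range_self α p)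
  let α' : P →ₗ[ℂ] R := α.codRestrict R hmem
  have : CompleteSpace R :=
    (Submodule.isClosed_topologicalClosure (LinearMap.range α)).completeSpace_coe
  have hdense : DenseRange α' := by
    intro x
    rw [closure_subtype]
    have h1 : Set.image Subtype.val (Set.range α') = Set.range α := by
      rw [← Set.range_comp]; rfl
    rw [h1]
    exact x.2
  have hn : ∀ p, ‖β p‖ ≤ 1 * ‖α' p‖ := by intro p; rw [one_mul]; exact h p
  refine ⟨(β.extendOfNorm α').comp R.orthogonalProjectionOnto, ?_, ?_⟩
  · intro x
    refine (LinearMap.norm_extendOfNorm_apply_le hdense 1 hn _).trans ?_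
    rw [one_mul]
    exact Submodule.norm_orthogonalProjectionOnto_apply_le R x
  · intro p
    have : R.orthogonalProjectionOnto (α p) = α' p := by
      have := Submodule.orthogonalProjectionOnto_mem_subspace_eq_self (α' p)
      simpa [α'] using this
    simp only [ContinuousLinearMap.comp_apply, this]
    exact LinearMap.extendOfNorm_eq hdense ⟨1, hn⟩ p

lemma exists_contraction_of_gram {ι E₁ E₂ : Type*}
    [NormedAddCommGroup E₁] [InnerProductSpace ℂ E₁] [CompleteSpace E₁]
    [NormedAddCommGroup E₂] [InnerProductSpace ℂ E₂] [CompleteSpace E₂]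
    (x : ι → E₁) (y : ι → E₂) (h : ∀ i j, inner ℂ (y i) (y j) = inner ℂ (x i) (x j)) :
    ∃ V : E₁ →L[ℂ] E₂, (∀ x, ‖V x‖ ≤ ‖x‖) ∧ ∀ i, V (x i) = y i := by
  obtain ⟨V, hV, hV2⟩ := exists_contraction (Finsupp.linearCombination ℂ x)
    (Finsupp.linearCombination ℂ y) (fun p => by
      apply le_of_eq
      have : inner ℂ (Finsupp.linearCombination ℂ y p) (Finsupp.linearCombination ℂ y p)
        = inner ℂ (Finsupp.linearCombination ℂ x p) (Finsupp.linearCombination ℂ x p) := by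
        simp only [Finsupp.linearCombination_apply, Finsupp.sum_inner, Finsupp.inner_sum,
          inner_smul_left, inner_smul_right, h]
      rw [inner_self_eq_norm_sq_to_K, inner_self_eq_norm_sq_to_K] at this
      have h2 : ‖Finsupp.linearCombination ℂ y p‖ ^ 2
        = ‖Finsupp.linearCombination ℂ x p‖ ^ 2 := by exact_mod_cast this
      exact (pow_left_inj₀ (norm_nonneg _) (norm_nonneg _) two_ne_zero).1 h2)
  refine ⟨V, hV, fun i => ?_⟩
  have := hV2 (Finsupp.single i 1)
  simpa using this
/-! ### The defect kernel -/

/-- translate of `q`. -/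
def sft {d : ℕ} (q : Idx d → ℂ) (m l : Idx d) : ℂ := if l ≤ m then q (m - l) else 0

/-- the defect kernel `N² - T T^*` in coordinates. -/
def defect {d : ℕ} (q : Idx d → ℂ) (N : ℝ) (m n : Idx d) : ℂ :=
  (if m = n then ((N ^ 2 * beta d m : ℝ) : ℂ) else 0)
    - ∑ l ∈ Finset.Iic m, (beta d l : ℂ) * (sft q m l * conj (sft q n l))

lemma defect_eq {d : ℕ} (q : Idx d → ℂ) (N : ℝ) (m n b : Idx d) (hb : m ≤ b) :
    defect q N m n = (if m = n then ((N ^ 2 * beta d m : ℝ) : ℂ) else 0)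
    - ∑ l ∈ Finset.Iic b, (beta d l : ℂ) * (sft q m l * conj (sft q n l)) := by
  unfold defect
  congr 1
  refine Finset.sum_subset (Finset.Iic_subset_Iic.2 hb) ?_
  intro l _ hl
  have : ¬ l ≤ m := fun h => hl (Finset.mem_Iic.2 h)
  simp [sft, this]

lemma defect_herm {d : ℕ} (q : Idx d → ℂ) (N : ℝ) (m n : Idx d) :
    conj (defect q N n m) = defect q N m n := by
  rw [defect_eq q N m n (m ⊔ n) le_sup_left, defect_eq q N n m (m ⊔ n) le_sup_right,
    map_sub, map_sum]
  congr 1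
  · by_cases h : m = n
    · subst h; simp
    · simp [h, Ne.symm h]
  · refine Finset.sum_congr rfl fun l _ => ?_
    simp [mul_comm]

lemma sum_comp_e {d : ℕ} {M : Type*} [AddCommMonoid M] [Module ℝ M] (b : Idx d) (g : Idx d → M)
    (hg : ∀ n, ¬ n ≤ b → g n = 0) :
    ∑ j, ∑ l ∈ Finset.Iic b, beta d l • g (l + e d j)
      = ∑ m ∈ Finset.Iic b, (if m = 0 then 0 else beta d m • g m) := by
  have h1 : ∀ j, ∑ l ∈ Finset.Iic b, beta d l • g (l + e d j)
      = ∑ m ∈ Finset.Iic b, (if e d j ≤ m then beta d (m - e d j) else 0) • g m := by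
    intro j
    rw [← sum_shift b (e d j) (fun l => beta d l • g (l + e d j))
      (fun n hn => by rw [hg _ hn, smul_zero])]
    refine Finset.sum_congr rfl fun m _ => ?_
    split_ifs with h
    · simp only [tsub_add_cancel_of_le h]
    · rw [zero_smul]
  simp only [h1]
  rw [Finset.sum_comm]
  refine Finset.sum_congr rfl fun m _ => ?_
  rw [← Finset.sum_smul]
  split_ifs with h
  · subst h
    have : ∀ j, ¬ e d j ≤ 0 := fun j h => by simpa using (e_le_iff d j 0).1 h
    simp [this]
  · rw [beta_pascal d m h]

lemma sft_add {d : ℕ} (q : Idx d → ℂ) (m l : Idx d) (j : Fin d) :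
    sft q m (l + e d j) = if e d j ≤ m then sft q (m - e d j) l else 0 := by
  unfold sft
  by_cases h : e d j ≤ m
  · rw [if_pos h]
    have h2 : l + e d j ≤ m ↔ l ≤ m - e d j := by
      constructor
      · intro h3; exact le_tsub_of_add_le_right h3
      · intro h3
        calc l + e d j ≤ m - e d j + e d j := by gcongr
          _ = m := tsub_add_cancel_of_le h
    simp only [h2]
    congr 2
    rw [add_comm, tsub_add_eq_tsub_tsub]
  · rw [if_neg h, if_neg]
    intro h2; exact h (le_trans le_add_self h2)

lemma sft_zero {d : ℕ} (q : Idx d → ℂ) (m : Idx d) : sft q m 0 = q m := by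
  simp [sft]

lemma defect_rec {d : ℕ} (q : Idx d → ℂ) (N : ℝ) (m n : Idx d) :
    q m * conj (q n) + defect q N m n
      = (if m = 0 then (N : ℂ) else 0) * (if n = 0 then (N : ℂ) else 0)
        + ∑ j, (if e d j ≤ m ∧ e d j ≤ n then defect q N (m - e d j) (n - e d j) else 0) := by
  set b := m ⊔ n with hb
  have hm : m ≤ b := le_sup_left
  have hn : n ≤ b := le_sup_right
  set g : Idx d → ℂ := fun l => sft q m l * conj (sft q n l) with hg
  have hg0 : ∀ l, ¬ l ≤ b → g l = 0 := by
    intro l hl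
    have : ¬ l ≤ m := fun h => hl (h.trans hm)
    simp [hg, sft, this]
  set D : Idx d → ℂ := fun l => if l = m ∧ l = n then ((N ^ 2 : ℝ) : ℂ) else 0 with hD
  have hD0 : ∀ l, ¬ l ≤ b → D l = 0 := by
    intro l hl
    have : ¬ l = m := fun h => hl (h.le.trans hm)
    simp [hD, this]
  have key : ∀ j, (if e d j ≤ m ∧ e d j ≤ n then defect q N (m - e d j) (n - e d j) else 0)
      = ∑ l ∈ Finset.Iic b, beta d l • (D (l + e d j) - g (l + e d j)) := by
    intro j
    simp only [smul_sub, Finset.sum_sub_distrib]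
    by_cases h : e d j ≤ m ∧ e d j ≤ n
    · rw [if_pos h, defect_eq q N _ _ b (tsub_le_self.trans hm)]
      congr 1
      · by_cases h2 : m - e d j = n - e d j
        · have h3 : m = n := by
            rw [← tsub_add_cancel_of_le h.1, h2, tsub_add_cancel_of_le h.2]
          subst h3
          rw [Finset.sum_eq_single (m - e d j)]
          · simp [hD, tsub_add_cancel_of_le h.1, mul_comm]
          · intro l _ hl
            have : l + e d j ≠ m := by
              intro h4; apply hl; rw [← h4]; simp
            simp [hD, this]
          · intro h4
            exact absurd (Finset.mem_Iic.2 (tsub_le_self.trans hm)) h4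
        · rw [if_neg h2]
          symm
          refine Finset.sum_eq_zero fun l _ => ?_
          have : ¬ (l + e d j = m ∧ l + e d j = n) := by
            rintro ⟨h3, h4⟩
            apply h2; rw [← h3, ← h4]
          simp [hD, this]
      · refine Finset.sum_congr rfl fun l _ => ?_
        simp [hg, sft_add, h.1, h.2]
    · rw [if_neg h]
      symm
      rw [sub_eq_zero]
      refine Finset.sum_congr rfl fun l _ => ?_
      have h1 : ¬ (l + e d j = m ∧ l + e d j = n) := by
        rintro ⟨h3, h4⟩
        exact h ⟨h3 ▸ le_add_self, h4 ▸ le_add_self⟩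
      have h2 : g (l + e d j) = 0 := by
        simp only [hg, sft_add]
        by_cases h3 : e d j ≤ m
        · have : ¬ e d j ≤ n := fun h4 => h ⟨h3, h4⟩
          simp [this]
        · simp [h3]
      simp [hD, h1, h2]
  rw [Finset.sum_congr rfl fun j _ => key j,
    sum_comp_e b (fun l => D l - g l) (fun l hl => by simp only [hD0 l hl, hg0 l hl, sub_zero])]
  have h3 : defect q N m n = ∑ l ∈ Finset.Iic b, beta d l • (D l - g l) := by
    rw [defect_eq q N m n b hm]
    simp only [smul_sub, Finset.sum_sub_distrib]
    congr 1
    by_cases h : m = n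
    · subst h
      rw [Finset.sum_eq_single m]
      · simp [hD, mul_comm]
      · intro l _ hl; simp [hD, hl]
      · intro h4; exact absurd (Finset.mem_Iic.2 hm) h4
    · rw [if_neg h]
      symm
      refine Finset.sum_eq_zero fun l _ => ?_
      have : ¬ (l = m ∧ l = n) := by
        rintro ⟨h3, h4⟩; exact h (h3.symm.trans h4)
      simp [hD, this]
  have h0 : (0 : Idx d) ∈ Finset.Iic b := Finset.mem_Iic.2 zero_le
  rw [h3, ← Finset.add_sum_erase _ _ h0, ← Finset.add_sum_erase _ (fun m => if m = 0 then (0:ℂ)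
    else beta d m • (D m - g m)) h0]
  have h5 : ∑ x ∈ (Finset.Iic b).erase 0, (if x = 0 then (0:ℂ) else beta d x • (D x - g x))
      = ∑ x ∈ (Finset.Iic b).erase 0, beta d x • (D x - g x) := by
    refine Finset.sum_congr rfl fun x hx => ?_
    rw [if_neg (Finset.ne_of_mem_erase hx)]
  rw [h5]
  have h6 : D 0 = (if m = 0 then (N : ℂ) else 0) * (if n = 0 then (N : ℂ) else 0) := by
    by_cases h1 : m = 0 <;> by_cases h2 : n = 0 <;> simp [hD, h1, h2, eq_comm, sq]
  simp only [beta_zero, one_smul, if_true, h6, hg, sft_zero]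
  ring

/-- the (semi)norm estimate for the adjoint. -/
lemma defect_pos {d : ℕ} (q : Idx d → ℂ) (N : ℝ) (b : Idx d) (F : Idx d → ℂ)
    (hF : ∀ n, ¬ n ≤ b → F n = 0) :
    ∑ m ∈ Finset.Iic b, ∑ n ∈ Finset.Iic b, conj (F m) * F n * defect q N m n
      = ((N ^ 2 * ∑ n ∈ Finset.Iic b, beta d n * ‖F n‖ ^ 2
          - ∑ l ∈ Finset.Iic b, beta d l * ‖adj b q F l‖ ^ 2 : ℝ) : ℂ) := by
  have hadj : ∀ l, adj b q F l = ∑ n ∈ Finset.Iic b, F n * conj (sft q n l) := by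
    intro l
    rw [adj, ← sum_shift b l (fun k => conj (q k) * F (k + l))
      (fun n hn => by rw [hF _ hn, mul_zero])]
    refine Finset.sum_congr rfl fun n _ => ?_
    unfold sft
    split_ifs with h
    · rw [tsub_add_cancel_of_le h, mul_comm]
    · simp
  have h1 : ∀ m ∈ Finset.Iic b, ∀ n ∈ Finset.Iic b, conj (F m) * F n * defect q N m n
      = (if m = n then ((N ^ 2 * (beta d m * ‖F m‖ ^ 2) : ℝ) : ℂ) else 0)
        - ∑ l ∈ Finset.Iic b, (beta d l : ℂ) * (conj (F m * conj (sft q m l))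
            * (F n * conj (sft q n l))) := by
    intro m hm n _
    rw [defect_eq q N m n b (Finset.mem_Iic.1 hm), mul_sub, Finset.mul_sum]
    congr 1
    · split_ifs with h
      · subst h
        push_cast
        rw [← Complex.conj_mul']
        ring
      · simp
    · refine Finset.sum_congr rfl fun l _ => ?_
      simp only [map_mul, Complex.conj_conj]
      ring
  rw [Finset.sum_congr rfl fun m hm => Finset.sum_congr rfl fun n hn => h1 m hm n hn]
  simp only [Finset.sum_sub_distrib]
  push_cast
  congr 1
  · rw [Finset.mul_sum]
    refine Finset.sum_congr rfl fun m hm => ?_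
    rw [Finset.sum_ite_eq, if_pos hm]
  · have : ∀ m ∈ Finset.Iic b, ∑ n ∈ Finset.Iic b, ∑ l ∈ Finset.Iic b,
        (beta d l : ℂ) * (conj (F m * conj (sft q m l)) * (F n * conj (sft q n l)))
        = ∑ l ∈ Finset.Iic b, (beta d l : ℂ) * (conj (F m * conj (sft q m l)) * adj b q F l) := by
      intro m _
      rw [Finset.sum_comm]
      refine Finset.sum_congr rfl fun l _ => ?_
      rw [hadj, Finset.mul_sum, Finset.mul_sum]
    rw [Finset.sum_congr rfl this, Finset.sum_comm]
    refine Finset.sum_congr rfl fun l _ => ?_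
    rw [← Complex.conj_mul', ← Finset.mul_sum, ← Finset.sum_mul, ← map_sum, ← hadj]
/-! ### Lurking isometry -/

lemma exists_rec {d : ℕ} {K : Type*} [Zero K] (Φ : (Idx d → K) → Idx d → K)
    (hΦ : ∀ u u' n, (∀ j, e d j ≤ n → u (n - e d j) = u' (n - e d j)) → Φ u n = Φ u' n) :
    ∃ u, ∀ n, u n = Φ u n := by
  let it : ℕ → Idx d → K := fun s => Nat.rec (fun _ => 0) (fun _ u => Φ u) s
  refine ⟨fun n => it (∑ i, n i + 1) n, fun n => ?_⟩
  change Φ (it (∑ i, n i)) n = _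
  apply hΦ
  intro j hj
  have h1 : ∑ i, n i = ∑ i, (n - e d j) i + 1 := by
    conv_lhs => rw [← tsub_add_cancel_of_le hj]
    simp only [Pi.add_apply, Finset.sum_add_distrib, sum_e]
  rw [h1]

/-- input vectors of the lurking isometry. -/
def inVec {d : ℕ} {K : Type} [NormedAddCommGroup K] [InnerProductSpace ℂ K] (N : ℝ)
    (u : Idx d → K) (n : Idx d) : WithLp 2 (ℂ × PiLp 2 (fun _ : Fin d => K)) :=
  WithLp.toLp 2 ((if n = 0 then (N : ℂ) else 0),
    WithLp.toLp 2 (fun j => if e d j ≤ n then u (n - e d j) else 0))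

lemma inVec_sum {d : ℕ} {K : Type} [NormedAddCommGroup K] [InnerProductSpace ℂ K] (N : ℝ)
    (u : Idx d → K) (b l : Idx d) (F : Idx d → ℂ) (hF : ∀ n, ¬ n ≤ b → F n = 0) :
    ∑ k ∈ Finset.Iic b, F (k + l) • inVec N u k
      = WithLp.toLp 2 (F l * N, WithLp.toLp 2 (fun j : Fin d =>
          ∑ k ∈ Finset.Iic b, F (k + (l + e d j)) • u k)) := by
  have h1 : ∀ f : Idx d → WithLp 2 (ℂ × PiLp 2 (fun _ : Fin d => K)),
      (∑ k ∈ Finset.Iic b, f k) = WithLp.toLp 2 (∑ k ∈ Finset.Iic b, (f k).fst,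
        WithLp.toLp 2 (fun j : Fin d => ∑ k ∈ Finset.Iic b, (f k).snd j)) := by
    intro f
    induction (Finset.Iic b) using Finset.induction_on with
    | empty => simp; rfl
    | insert a s ha ih =>
      simp only [Finset.sum_insert ha, ih]
      rfl
  rw [h1]
  congr 2
  · have h0 : (0 : Idx d) ∈ Finset.Iic b := Finset.mem_Iic.2 zero_le
    rw [Finset.sum_eq_single (0 : Idx d)]
    · simp [inVec]
    · intro k _ hk
      simp [inVec, hk]
    · intro h; exact absurd h0 h
  · congr 1
    funext j
    rw [← sum_shift b (e d j) (fun k => F (k + (l + e d j)) • u k)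
      (fun n hn => by
        rw [hF _ (fun h => hn (le_trans ?_ h)), zero_smul]
        rw [add_comm l, ← add_assoc]
        exact le_self_add)]
    refine Finset.sum_congr rfl fun k _ => ?_
    by_cases h : e d j ≤ k
    · have : k - e d j + (l + e d j) = k + l := by
        rw [add_comm l, ← add_assoc, tsub_add_cancel_of_le h]
      simp [inVec, h, this]
    · simp [inVec, h]

lemma inVec_inner {d : ℕ} {K : Type} [NormedAddCommGroup K] [InnerProductSpace ℂ K] (N : ℝ)
    (v : Idx d → K) (m n : Idx d) :
    inner ℂ (inVec N v m) (inVec N v n)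
      = (if m = 0 then (N : ℂ) else 0) * (if n = 0 then (N : ℂ) else 0)
        + ∑ j, (if e d j ≤ m ∧ e d j ≤ n then
            inner ℂ (v (m - e d j)) (v (n - e d j)) else 0) := by
  rw [WithLp.prod_inner_apply, PiLp.inner_apply]
  congr 1
  · by_cases h1 : m = 0 <;> by_cases h2 : n = 0 <;> simp [inVec, h1, h2]
    rw [← Complex.ofReal_pow, sq_abs]; push_cast; ring
  · refine Finset.sum_congr rfl fun j _ => ?_
    by_cases h1 : e d j ≤ m <;> by_cases h2 : e d j ≤ n <;> simp [inVec, h1, h2]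

theorem core {d : ℕ} (X : Set (Idx d)) (hX : MonotoneSet d X) (q : Idx d → ℂ) (N : ℝ)
    (hN : ∀ (b : Idx d) (F : Idx d → ℂ), (∀ n ∉ X, F n = 0) → (∀ n, ¬ n ≤ b → F n = 0) →
      ∑ l ∈ Finset.Iic b, beta d l * ‖adj b q F l‖ ^ 2
        ≤ N ^ 2 * ∑ n ∈ Finset.Iic b, beta d n * ‖F n‖ ^ 2) :
    ∃ ψ : Idx d → ℂ, (∀ n ∈ X, ψ n = q n) ∧
      ∀ (b : Idx d) (F : Idx d → ℂ), (∀ n, ¬ n ≤ b → F n = 0) →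
      ∑ l ∈ Finset.Iic b, beta d l * ‖adj b ψ F l‖ ^ 2
        ≤ N ^ 2 * ∑ n ∈ Finset.Iic b, beta d n * ‖F n‖ ^ 2 := by
  obtain ⟨K, _, _, _, v, hv⟩ := exists_gram
    (fun m n : Idx d => if m ∈ X ∧ n ∈ X then defect q N m n else 0)
    (fun m n => by
      by_cases h : m ∈ X ∧ n ∈ X
      · simp [h, defect_herm]
      · have h' : ¬ (n ∈ X ∧ m ∈ X) := fun h2 => h h2.symm
        simp only [if_neg h, if_neg h', map_zero])
    (fun F => by
      obtain ⟨b, hb⟩ := Finset.exists_le F.support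
      have hFb : ∀ n, ¬ n ≤ b → F n = 0 := fun n hn => by
        by_contra h
        exact hn (hb n (Finsupp.mem_support_iff.2 h))
      have hsub : F.support ⊆ Finset.Iic b := fun n hn => Finset.mem_Iic.2 (hb n hn)
      have h1 : (F.sum fun m z => F.sum fun n w =>
          conj z * w * (if m ∈ X ∧ n ∈ X then defect q N m n else 0))
          = ∑ m ∈ Finset.Iic b, ∑ n ∈ Finset.Iic b,
            conj (X.indicator F m) * X.indicator F n * defect q N m n := by
        rw [Finsupp.sum_of_support_subset _ hsub _ (by simp)]
        refine Finset.sum_congr rfl fun m _ => ?_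
        rw [Finsupp.sum_of_support_subset _ hsub _ (by simp)]
        refine Finset.sum_congr rfl fun n _ => ?_
        by_cases h1 : m ∈ X <;> by_cases h2 : n ∈ X <;> simp [h1, h2]
      have hz : ∀ n, ¬ n ≤ b → X.indicator F n = 0 := fun n hn => by
        simp [Set.indicator_apply, hFb n hn]
      rw [h1, defect_pos q N b _ hz, Complex.ofReal_re, sub_nonneg]
      exact hN b _ (fun n hn => Set.indicator_of_notMem hn _) hz)
  obtain ⟨V, hV, hVx⟩ := exists_contraction_of_gram
    (fun n : X => inVec N v n.1)
    (fun n : X => (WithLp.toLp 2 (conj (q n.1), v n.1) : WithLp 2 (ℂ × K)))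
    (fun m n => by
      have hm := m.2
      have hn := n.2
      rw [inVec_inner, WithLp.prod_inner_apply]
      have h1 : inner ℂ (v m.1) (v n.1) = defect q N m.1 n.1 := by rw [hv]; simp [hm, hn]
      have h2 : ∀ j, (if e d j ≤ m.1 ∧ e d j ≤ n.1 then
            inner ℂ (v (m.1 - e d j)) (v (n.1 - e d j)) else 0)
          = (if e d j ≤ m.1 ∧ e d j ≤ n.1 then defect q N (m.1 - e d j) (n.1 - e d j) else 0) := by
        intro j
        split_ifs
        · rw [hv, if_pos ⟨monotone_le hX tsub_le_self hm, monotone_le hX tsub_le_self hn⟩]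
        · rfl
      rw [Finset.sum_congr rfl fun j _ => h2 j, ← defect_rec]
      simp [h1, mul_comm])
  obtain ⟨u, hu⟩ := exists_rec (K := K) (fun u n => (V (inVec N u n)).snd) (by
    intro u u' n h
    have : inVec N u n = inVec N u' n := by
      unfold inVec
      congr 3
      funext j
      split_ifs with hj
      · exact h j hj
      · rfl
    simp only [this])
  have hin : ∀ n, (∀ m, m < n → m ∈ X → u m = v m) → n ∈ X → inVec N u n = inVec N v n := by
    intro n h hn
    unfold inVec
    congr 3
    funext j
    split_ifs with hj
    · apply h
      · refine lt_of_le_of_ne tsub_le_self fun h2 => ?_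
        have := congrFun h2 j
        have h3 := (e_le_iff d j n).1 hj
        simp [e] at this
        omega
      · exact monotone_le hX tsub_le_self hn
    · rfl
  have huv : ∀ n, n ∈ X → u n = v n := by
    intro n
    induction n using WellFoundedLT.induction with
    | ind n ih =>
      intro hn
      rw [hu n, hin n ih hn]
      have := hVx ⟨n, hn⟩
      simp only at this
      rw [this]
      rfl
  refine ⟨fun n => conj (V (inVec N u n)).fst, fun n hn => ?_, ?_⟩
  · change conj (V (inVec N u n)).fst = q n
    rw [hin n (fun m _ hm => huv m hm) hn]
    have := hVx ⟨n, hn⟩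
    simp only at this
    rw [this]
    simp
  intro b F hF
  set Γ : Idx d → K := fun l => ∑ k ∈ Finset.Iic b, F (k + l) • u k with hΓ
  have hΓ0 : ∀ l, ¬ l ≤ b → ‖Γ l‖ ^ 2 = 0 := by
    intro l hl
    have : Γ l = 0 := Finset.sum_eq_zero fun k _ => by
      rw [hF _ (fun h => hl (le_trans le_add_self h)), zero_smul]
    simp [this]
  have step : ∀ l, ‖adj b (fun n => conj (V (inVec N u n)).fst) F l‖ ^ 2 + ‖Γ l‖ ^ 2
      ≤ N ^ 2 * ‖F l‖ ^ 2 + ∑ j, ‖Γ (l + e d j)‖ ^ 2 := by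
    intro l
    have h1 := hV (∑ k ∈ Finset.Iic b, F (k + l) • inVec N u k)
    have h2 : V (∑ k ∈ Finset.Iic b, F (k + l) • inVec N u k)
        = WithLp.toLp 2 (adj b (fun n => conj (V (inVec N u n)).fst) F l, Γ l) := by
      rw [map_sum]
      have hs : ∀ f : Idx d → WithLp 2 (ℂ × K),
          (∑ k ∈ Finset.Iic b, f k) = WithLp.toLp 2 (∑ k ∈ Finset.Iic b, (f k).fst,
            ∑ k ∈ Finset.Iic b, (f k).snd) := by
        intro f
        induction (Finset.Iic b) using Finset.induction_on with
        | empty => simp; rfl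
        | insert a s ha ih =>
          simp only [Finset.sum_insert ha, ih]
          rfl
      rw [hs]
      congr 2
      · refine Finset.sum_congr rfl fun k _ => ?_
        simp [mul_comm]
      · refine Finset.sum_congr rfl fun k _ => ?_
        simp [hu k]
    rw [h2, inVec_sum N u b l F hF] at h1
    have h3 := pow_le_pow_left₀ (norm_nonneg _) h1 2
    rw [WithLp.prod_norm_sq_eq_of_L2, WithLp.prod_norm_sq_eq_of_L2, PiLp.norm_sq_eq_of_L2] at h3
    simpa [mul_pow, mul_comm] using h3
  have hsum := Finset.sum_le_sum fun l (_ : l ∈ Finset.Iic b) =>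
    mul_le_mul_of_nonneg_left (step l) (beta_pos d l).le
  simp only [mul_add, Finset.sum_add_distrib] at hsum
  have hG : ∑ l ∈ Finset.Iic b, beta d l * ∑ j, ‖Γ (l + e d j)‖ ^ 2
      ≤ ∑ l ∈ Finset.Iic b, beta d l * ‖Γ l‖ ^ 2 := by
    simp only [Finset.mul_sum]
    rw [Finset.sum_comm]
    have := sum_comp_e b (fun l => ‖Γ l‖ ^ 2) hΓ0
    simp only [smul_eq_mul] at this
    rw [this]
    refine Finset.sum_le_sum fun m _ => ?_
    split_ifs
    · exact mul_nonneg (beta_pos d m).le (sq_nonneg _)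
    · exact le_rfl
  have hE : ∑ l ∈ Finset.Iic b, beta d l * (N ^ 2 * ‖F l‖ ^ 2)
      = N ^ 2 * ∑ n ∈ Finset.Iic b, beta d n * ‖F n‖ ^ 2 := by
    rw [Finset.mul_sum]
    refine Finset.sum_congr rfl fun l _ => by ring
  linarith
/-! ### The compressed polynomial operator -/

/-- compressed shift by `s`. -/
def shX {d : ℕ} (X : Set (Idx d)) (s : Idx d) (a : Idx d → ℂ) (n : Idx d) : ℂ :=
  if n ∈ X ∧ s ≤ n then a (n - s) else 0

lemma MopX_shX {d : ℕ} {X : Set (Idx d)} (hX : MonotoneSet d X) (s : Idx d) (a : Idx d → ℂ)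
    (j : Fin d) : MopX d X j (shX X s a) = shX X (s + e d j) a := by
  funext n
  unfold MopX Mop shX
  by_cases hn : n ∈ X
  · rw [Set.indicator_of_mem hn]
    by_cases hj : 0 < n j
    · have hj' := (e_le_iff d j n).2 hj
      have h2 : s + e d j ≤ n ↔ s ≤ n - e d j := by
        constructor
        · intro h3; exact le_tsub_of_add_le_right h3
        · intro h3
          calc s + e d j ≤ n - e d j + e d j := by gcongr
            _ = n := tsub_add_cancel_of_le hj'
      have h3 : n - e d j ∈ X := monotone_le hX tsub_le_self hn
      have h4 : n - (s + e d j) = n - e d j - s := by rw [add_comm, tsub_add_eq_tsub_tsub]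
      simp [hj, hn, h2, h3, h4]
    · have : ¬ s + e d j ≤ n := fun h => hj ((e_le_iff d j n).1 (le_trans le_add_self h))
      simp [hj, this]
  · rw [Set.indicator_of_notMem hn]
    simp [hn]

lemma MopX_iter_shX {d : ℕ} {X : Set (Idx d)} (hX : MonotoneSet d X) (s : Idx d) (a : Idx d → ℂ)
    (j : Fin d) (t : ℕ) : (MopX d X j)^[t] (shX X s a) = shX X (s + t • e d j) a := by
  induction t with
  | zero => simp
  | succ t ih =>
    rw [Function.iterate_succ_apply', ih, MopX_shX hX, succ_nsmul, add_assoc]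

lemma list_shX {d : ℕ} {X : Set (Idx d)} (hX : MonotoneSet d X) (k : Idx d) (a : Idx d → ℂ)
    (ha : ∀ n ∉ X, a n = 0) (L : List (Fin d)) :
    ((L.map fun j => (MopX d X j)^[k j]).foldr (· ∘ ·) id) a
      = shX X ((L.map fun j => k j • e d j).sum) a := by
  induction L with
  | nil =>
    funext n
    by_cases hn : n ∈ X
    · simp [shX, hn]
    · simp [shX, hn, ha n hn]
  | cons j L ih =>
    simp only [List.map_cons, List.foldr_cons, Function.comp_apply, ih, MopX_iter_shX hX,
      List.sum_cons]
    rw [add_comm]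

lemma opPow_shX {d : ℕ} {X : Set (Idx d)} (hX : MonotoneSet d X) (k : Idx d) (a : Idx d → ℂ)
    (ha : ∀ n ∉ X, a n = 0) : opPow d (MopX d X) k a = shX X k a := by
  unfold opPow
  rw [List.ofFn_eq_map, list_shX hX k a ha]
  congr 1
  have : ((List.finRange d).map fun j => k j • e d j).sum = ∑ j, k j • e d j := by
    rw [← List.ofFn_eq_map, List.sum_ofFn]
  rw [this]
  funext i
  simp [e, Finset.sum_apply]

lemma polyOp_apply {d : ℕ} {X : Set (Idx d)} (hX : MonotoneSet d X)
    (Q : MvPolynomial (Fin d) ℂ) (a : Idx d → ℂ) (ha : ∀ n ∉ X, a n = 0) :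
    polyOp d Q (MopX d X) a = X.indicator (mconv d (Qhat d Q) a) := by
  funext n
  unfold polyOp
  simp only [opPow_shX hX _ a ha]
  by_cases hn : n ∈ X
  · rw [Set.indicator_of_mem hn, mconv]
    simp only [shX, hn, true_and, mul_ite, mul_zero]
    rw [← Finset.sum_filter]
    have h1 : ∑ k ∈ Finset.Iic n, Qhat d Q k * a (n - k)
        = ∑ k ∈ (Finset.Iic n).filter (fun k => Qhat d Q k ≠ 0), Qhat d Q k * a (n - k) := by
      rw [Finset.sum_filter]
      refine Finset.sum_congr rfl fun k _ => ?_
      split_ifs with h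
      · rfl
      · rw [not_not.1 h, zero_mul]
    rw [h1]
    refine Finset.sum_bij' (fun k _ => ⇑k) (fun k _ => Finsupp.equivFunOnFinite.symm k)
      ?_ ?_ ?_ ?_ ?_
    · intro k hk
      simp only [Finset.mem_filter, MvPolynomial.mem_support_iff, Finset.mem_Iic] at hk ⊢
      refine ⟨hk.2, ?_⟩
      simpa [Qhat] using hk.1
    · intro k hk
      simp only [Finset.mem_filter, MvPolynomial.mem_support_iff, Finset.mem_Iic] at hk ⊢
      exact ⟨hk.2, by simpa using hk.1⟩
    · intro k hk; simp
    · intro k hk; simp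
    · intro k hk; simp [Qhat]
  · rw [Set.indicator_of_notMem hn]
    simp [shX, hn]

lemma shX_bound {d : ℕ} (X : Set (Idx d)) (k : Idx d) (a : Idx d → ℂ) (ha : MemHd d a) :
    (Summable fun n => ‖shX X k a n‖ ^ 2 / beta d n) ∧
      ∑' n, ‖shX X k a n‖ ^ 2 / beta d n ≤ ∑' n, ‖a n‖ ^ 2 / beta d n := by
  have hpos : ∀ (c : Idx d → ℂ) n, 0 ≤ ‖c n‖ ^ 2 / beta d n := fun c n =>
    div_nonneg (sq_nonneg _) (beta_pos d n).le
  have hinj : Function.Injective (fun n : Idx d => n + k) := add_left_injective k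
  have hsupp : ∀ n ∉ Set.range (fun n : Idx d => n + k), ‖shX X k a n‖ ^ 2 / beta d n = 0 := by
    intro n hn
    have : ¬ k ≤ n := fun h => hn ⟨n - k, tsub_add_cancel_of_le h⟩
    simp [shX, this]
  have hle : ∀ n, ‖shX X k a (n + k)‖ ^ 2 / beta d (n + k) ≤ ‖a n‖ ^ 2 / beta d n := by
    intro n
    have h1 : ‖shX X k a (n + k)‖ ≤ ‖a n‖ := by
      unfold shX
      split_ifs
      · simp
      · simp
    exact div_le_div₀ (sq_nonneg _) (pow_le_pow_left₀ (norm_nonneg _) h1 2) (beta_pos d n)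
      (beta_le_add d n k)
  have hs : Summable ((fun n => ‖shX X k a n‖ ^ 2 / beta d n) ∘ (fun n : Idx d => n + k)) :=
    Summable.of_nonneg_of_le (fun n => hpos _ _) hle ha
  refine ⟨(hinj.summable_iff hsupp).1 hs, ?_⟩
  rw [← hinj.tsum_eq (f := fun n => ‖shX X k a n‖ ^ 2 / beta d n)
    (fun n hn => by by_contra h; exact hn (hsupp n h))]
  exact Summable.tsum_le_tsum hle hs ha

lemma polyOp_bound {d : ℕ} {X : Set (Idx d)} (hX : MonotoneSet d X)
    (Q : MvPolynomial (Fin d) ℂ) : ∃ C, 0 ≤ C ∧ ∀ a, MemHdX d X a →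
      MemHd d (polyOp d Q (MopX d X) a) ∧
      hdNorm d (polyOp d Q (MopX d X) a) ≤ C * hdNorm d a := by
  obtain ⟨A, hA⟩ : ∃ A : ℝ, A = ∑ k ∈ Q.support, ‖Q.coeff k‖ ^ 2 := ⟨_, rfl⟩
  have hA0 : 0 ≤ A := hA ▸ Finset.sum_nonneg fun _ _ => sq_nonneg _
  refine ⟨Real.sqrt (A * Q.support.card), Real.sqrt_nonneg _, fun a ha => ?_⟩
  have hle : ∀ n, ‖polyOp d Q (MopX d X) a n‖ ^ 2 / beta d n
      ≤ A * ∑ k ∈ Q.support, ‖shX X (⇑k) a n‖ ^ 2 / beta d n := by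
    intro n
    rw [← Finset.sum_div, ← mul_div_assoc]
    refine div_le_div_of_nonneg_right ?_ (beta_pos d n).le
    unfold polyOp
    simp only [opPow_shX hX _ a ha.1]
    calc _ ≤ (∑ k ∈ Q.support, ‖Q.coeff k‖ * ‖shX X (⇑k) a n‖) ^ 2 := by
          refine pow_le_pow_left₀ (norm_nonneg _) ?_ 2
          refine (norm_sum_le _ _).trans (le_of_eq ?_)
          simp
      _ ≤ A * ∑ k ∈ Q.support, ‖shX X (⇑k) a n‖ ^ 2 := by
          rw [hA]
          exact Finset.sum_mul_sq_le_sq_mul_sq Q.support (fun k => ‖Q.coeff k‖)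
            (fun k => ‖shX X (⇑k) a n‖)
  have hS0 : ∀ k ∈ Q.support, Summable fun n => ‖shX X (⇑k) a n‖ ^ 2 / beta d n :=
    fun k _ => (shX_bound X (⇑k) a ha.2).1
  have hS1 : Summable fun n => ∑ k ∈ Q.support, ‖shX X (⇑k) a n‖ ^ 2 / beta d n :=
    summable_sum hS0
  have hS : Summable fun n => A * ∑ k ∈ Q.support, ‖shX X (⇑k) a n‖ ^ 2 / beta d n :=
    hS1.mul_left A
  have hmem : MemHd d (polyOp d Q (MopX d X) a) :=
    Summable.of_nonneg_of_le (f := fun n => A * ∑ k ∈ Q.support, ‖shX X (⇑k) a n‖ ^ 2 / beta d n)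
      (g := fun n => ‖polyOp d Q (MopX d X) a n‖ ^ 2 / beta d n)
      (fun n => div_nonneg (sq_nonneg _) (beta_pos d n).le) hle hS
  refine ⟨hmem, ?_⟩
  unfold hdNorm
  rw [← Real.sqrt_mul (mul_nonneg hA0 (Nat.cast_nonneg _))]
  apply Real.sqrt_le_sqrt
  refine (Summable.tsum_le_tsum hle hmem hS).trans ?_
  rw [tsum_mul_left, Summable.tsum_finsetSum hS0, mul_assoc]
  refine mul_le_mul_of_nonneg_left ?_ hA0
  rw [← nsmul_eq_mul]
  exact Finset.sum_le_card_nsmul _ _ _ fun k _ => (shX_bound X (⇑k) a ha.2).2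

/-! ### Passing between the operator and its adjoint -/

lemma cauchy {d : ℕ} (b : Idx d) (c F : Idx d → ℂ) :
    ‖∑ n ∈ Finset.Iic b, c n * conj (F n)‖ ^ 2
      ≤ (∑ n ∈ Finset.Iic b, ‖c n‖ ^ 2 / beta d n)
        * ∑ n ∈ Finset.Iic b, beta d n * ‖F n‖ ^ 2 := by
  refine le_trans ?_ (Finset.sum_sq_le_sum_mul_sum_of_sq_eq_mul
    (r := fun n => ‖c n‖ * ‖F n‖) _ ?_ ?_ ?_)
  · refine pow_le_pow_left₀ (norm_nonneg _) ?_ 2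
    refine (norm_sum_le _ _).trans (le_of_eq ?_)
    simp
  · intro n _; exact div_nonneg (sq_nonneg _) (beta_pos d n).le
  · intro n _; exact mul_nonneg (beta_pos d n).le (sq_nonneg _)
  · intro n _
    have := (beta_pos d n).ne'
    field_simp

lemma sum_le_hdNorm {d : ℕ} (b : Idx d) (a : Idx d → ℂ) (ha : MemHd d a) :
    ∑ n ∈ Finset.Iic b, ‖a n‖ ^ 2 / beta d n ≤ hdNorm d a ^ 2 := by
  unfold hdNorm
  have hp : ∀ n, 0 ≤ ‖a n‖ ^ 2 / beta d n := fun n =>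
    div_nonneg (sq_nonneg _) (beta_pos d n).le
  rw [Real.sq_sqrt (tsum_nonneg hp)]
  exact ha.sum_le_tsum _ fun n _ => hp n

lemma le_of_sq_le {S A : ℝ} (hS : 0 ≤ S) (hA : 0 ≤ A) (h : S ^ 2 ≤ A * S) : S ≤ A := by
  rcases hS.eq_or_lt with h0 | h0
  · rw [← h0]; exact hA
  · rw [sq] at h
    exact le_of_mul_le_mul_right h h0

lemma primal_to_dual {d : ℕ} {X : Set (Idx d)} (hX : MonotoneSet d X)
    (q : Idx d → ℂ) (N : ℝ) (hN0 : 0 ≤ N)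
    (hN : ∀ a, MemHdX d X a → MemHd d (X.indicator (mconv d q a)) ∧
      hdNorm d (X.indicator (mconv d q a)) ≤ N * hdNorm d a)
    (b : Idx d) (F : Idx d → ℂ) (hFX : ∀ n ∉ X, F n = 0) (hF : ∀ n, ¬ n ≤ b → F n = 0) :
    ∑ l ∈ Finset.Iic b, beta d l * ‖adj b q F l‖ ^ 2
        ≤ N ^ 2 * ∑ n ∈ Finset.Iic b, beta d n * ‖F n‖ ^ 2 := by
  set S := ∑ l ∈ Finset.Iic b, beta d l * ‖adj b q F l‖ ^ 2 with hS
  have hS0 : 0 ≤ S := Finset.sum_nonneg fun l _ => mul_nonneg (beta_pos d l).le (sq_nonneg _)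
  have hB0 : 0 ≤ ∑ n ∈ Finset.Iic b, beta d n * ‖F n‖ ^ 2 :=
    Finset.sum_nonneg fun l _ => mul_nonneg (beta_pos d l).le (sq_nonneg _)
  set a : Idx d → ℂ := fun l => beta d l * adj b q F l with ha
  have hterm : ∀ l, ‖a l‖ ^ 2 / beta d l = beta d l * ‖adj b q F l‖ ^ 2 := by
    intro l
    have := (beta_pos d l).ne'
    simp only [ha, norm_mul, Complex.norm_real, Real.norm_eq_abs, mul_pow, sq_abs]
    field_simp
  have hoff : ∀ l ∉ Finset.Iic b, ‖a l‖ ^ 2 / beta d l = 0 := by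
    intro l hl
    rw [hterm, adj_off b q F hF l (fun h => hl (Finset.mem_Iic.2 h))]
    simp
  have hmem : MemHdX d X a := by
    refine ⟨fun n hn => ?_, summable_of_ne_finset_zero hoff⟩
    simp only [ha, adj_offX hX b q F hFX n hn, mul_zero]
  have hnorm : hdNorm d a ^ 2 = S := by
    unfold hdNorm
    rw [tsum_eq_sum hoff, Finset.sum_congr rfl fun l _ => hterm l, Real.sq_sqrt hS0]
  have h1 : ∑ n ∈ Finset.Iic b, X.indicator (mconv d q a) n * conj (F n) = (S : ℂ) := by
    have : ∀ n ∈ Finset.Iic b, X.indicator (mconv d q a) n * conj (F n)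
        = mconv d q a n * conj (F n) := by
      intro n _
      by_cases hn : n ∈ X
      · rw [Set.indicator_of_mem hn]
      · simp [hFX n hn]
    rw [Finset.sum_congr rfl this, duality b q a F hF, hS]
    push_cast
    refine Finset.sum_congr rfl fun l _ => ?_
    rw [← Complex.mul_conj']
    simp only [ha]; ring
  have h2 := cauchy b (X.indicator (mconv d q a)) F
  rw [h1, Complex.norm_real, Real.norm_eq_abs, sq_abs] at h2
  obtain ⟨h3, h4⟩ := hN a hmem
  have h5 := sum_le_hdNorm b _ h3
  have h6 : hdNorm d (X.indicator (mconv d q a)) ^ 2 ≤ N ^ 2 * S := by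
    rw [← hnorm, ← mul_pow]
    exact pow_le_pow_left₀ (Real.sqrt_nonneg _) h4 2
  refine le_of_sq_le hS0 (by positivity) ?_
  calc S ^ 2 ≤ _ := h2
    _ ≤ (N ^ 2 * S) * ∑ n ∈ Finset.Iic b, beta d n * ‖F n‖ ^ 2 :=
      mul_le_mul_of_nonneg_right (h5.trans h6) hB0
    _ = _ := by ring

lemma dual_to_primal {d : ℕ} (ψ : Idx d → ℂ) (N : ℝ) (hN0 : 0 ≤ N)
    (hψ : ∀ (b : Idx d) (F : Idx d → ℂ), (∀ n, ¬ n ≤ b → F n = 0) →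
      ∑ l ∈ Finset.Iic b, beta d l * ‖adj b ψ F l‖ ^ 2
        ≤ N ^ 2 * ∑ n ∈ Finset.Iic b, beta d n * ‖F n‖ ^ 2)
    (a : Idx d → ℂ) (ha : MemHd d a) :
    MemHd d (mconv d ψ a) ∧ hdNorm d (mconv d ψ a) ≤ N * hdNorm d a := by
  have hp : ∀ n, 0 ≤ ‖mconv d ψ a n‖ ^ 2 / beta d n := fun n =>
    div_nonneg (sq_nonneg _) (beta_pos d n).le
  have hbox : ∀ b : Idx d, ∑ n ∈ Finset.Iic b, ‖mconv d ψ a n‖ ^ 2 / beta d n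
      ≤ (N * hdNorm d a) ^ 2 := by
    intro b
    set S := ∑ n ∈ Finset.Iic b, ‖mconv d ψ a n‖ ^ 2 / beta d n with hS
    have hS0 : 0 ≤ S := Finset.sum_nonneg fun n _ => hp n
    set F : Idx d → ℂ := fun n => if n ≤ b then mconv d ψ a n / beta d n else 0 with hF
    have hF0 : ∀ n, ¬ n ≤ b → F n = 0 := fun n hn => by simp [hF, hn]
    have h1 : ∑ n ∈ Finset.Iic b, mconv d ψ a n * conj (F n) = (S : ℂ) := by
      rw [hS]
      push_cast
      refine Finset.sum_congr rfl fun n hn => ?_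
      rw [← Complex.mul_conj']
      simp only [hF, if_pos (Finset.mem_Iic.1 hn), map_div₀, Complex.conj_ofReal]
      ring
    have h2 : ∑ n ∈ Finset.Iic b, beta d n * ‖F n‖ ^ 2 = S := by
      refine Finset.sum_congr rfl fun n hn => ?_
      have := (beta_pos d n).ne'
      simp only [hF, if_pos (Finset.mem_Iic.1 hn), norm_div, Complex.norm_real, Real.norm_eq_abs,
        div_pow, sq_abs]
      field_simp
    have h3 := cauchy b a (adj b ψ F)
    rw [← duality b ψ a F hF0, h1, Complex.norm_real, Real.norm_eq_abs, sq_abs] at h3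
    have h4 := hψ b F hF0
    rw [h2] at h4
    have h5 := sum_le_hdNorm b a ha
    refine le_of_sq_le hS0 (sq_nonneg _) (h3.trans ?_)
    calc _ ≤ hdNorm d a ^ 2 * (N ^ 2 * S) := by
          refine mul_le_mul h5 h4 ?_ (sq_nonneg _)
          exact Finset.sum_nonneg fun l _ => mul_nonneg (beta_pos d l).le (sq_nonneg _)
      _ = _ := by ring
  have hfin : ∀ s : Finset (Idx d), ∑ n ∈ s, ‖mconv d ψ a n‖ ^ 2 / beta d n
      ≤ (N * hdNorm d a) ^ 2 := by
    intro s
    obtain ⟨b, hb⟩ := Finset.exists_le s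
    refine le_trans (Finset.sum_le_sum_of_subset_of_nonneg
      (fun n hn => Finset.mem_Iic.2 (hb n hn)) fun n _ _ => hp n) (hbox b)
  have hsum : MemHd d (mconv d ψ a) := summable_of_sum_le hp hfin
  refine ⟨hsum, ?_⟩
  have h0 : 0 ≤ N * hdNorm d a := mul_nonneg hN0 (Real.sqrt_nonneg _)
  rw [hdNorm, Real.sqrt_le_left h0]
  exact hsum.tsum_le_of_sum_le hfin

lemma opNormHdX_nonneg (d : ℕ) (X : Set (Idx d)) (T : (Idx d → ℂ) → (Idx d → ℂ)) :
    0 ≤ opNormHdX d X T := Real.sInf_nonneg fun _ h => h.1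

lemma le_opNormHdX (d : ℕ) (X : Set (Idx d)) (T : (Idx d → ℂ) → (Idx d → ℂ))
    (hT : ∃ C, 0 ≤ C ∧ ∀ a, MemHdX d X a → hdNorm d (T a) ≤ C * hdNorm d a)
    (a : Idx d → ℂ) (ha : MemHdX d X a) : hdNorm d (T a) ≤ opNormHdX d X T * hdNorm d a := by
  have h0 : 0 ≤ hdNorm d a := Real.sqrt_nonneg _
  rcases h0.eq_or_lt with h | h
  · obtain ⟨C, _, hC⟩ := hT
    have := hC a ha
    rw [← h, mul_zero] at this ⊢
    exact this
  · rw [← div_le_iff₀ h]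
    refine le_csInf hT fun C hC => ?_
    rw [div_le_iff₀ h]
    exact hC.2 a ha

end helpers

/-- **commutant lifting consequence.** Let `X ⊆ ℕ^d` be monotone and `Q` a
complex polynomial of `d` variables with `Q(M_z^X) ≠ 0`.  Then there is a multiplier `ψ`
of `H_d` with `‖ψ‖_{M(H_d)} ≤ ‖Q(M_z^X)‖` whose adjoint restricted to `H_d(X)` is
`(Q(M_z^X))^*` (equivalently `⟨M_ψ g, f⟩ = ⟨Q(M_z^X)(P_X g), f⟩` for all `g ∈ H_d`,
`f ∈ H_d(X)`); consequently `‖Q(M_z^X)‖ = ‖M_ψ|_{H_d(X)}‖`. -/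
theorem commutant_lifting_polynomial (d : ℕ) (X : Set (Idx d)) (hX : MonotoneSet d X)
    (Q : MvPolynomial (Fin d) ℂ)
    (hQ : ¬ ∀ a, MemHdX d X a → polyOp d Q (MopX d X) a = 0) :
    ∃ ψ : Idx d → ℂ, IsMultiplier d ψ ∧
      multNorm d ψ ≤ opNormHdX d X (polyOp d Q (MopX d X)) ∧
      (∀ f, MemHdX d X f → ∀ g, MemHd d g →
        hdInner d (mconv d ψ g) f
          = hdInner d (polyOp d Q (MopX d X) (X.indicator g)) f) ∧
      opNormHdX d X (polyOp d Q (MopX d X))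
        = opNormHdX d X (fun a => X.indicator (mconv d ψ a)) := by
  set T := polyOp d Q (MopX d X) with hT
  set N := opNormHdX d X T with hNdef
  have hN0 : 0 ≤ N := opNormHdX_nonneg d X T
  obtain ⟨C, hC0, hC⟩ := polyOp_bound hX Q
  have hTN : ∀ a, MemHdX d X a → hdNorm d (T a) ≤ N * hdNorm d a :=
    le_opNormHdX d X T ⟨C, hC0, fun a ha => (hC a ha).2⟩
  obtain ⟨ψ, hψq, hψ⟩ := core X hX (Qhat d Q) N (primal_to_dual hX (Qhat d Q) N hN0
    (fun a ha => by
      rw [← polyOp_apply hX Q a ha.1]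
      exact ⟨(hC a ha).1, hTN a ha⟩))
  have hmult := dual_to_primal ψ N hN0 hψ
  have hconv : ∀ (g : Idx d → ℂ), ∀ n ∈ X,
      mconv d ψ g n = T (X.indicator g) n := by
    intro g n hn
    rw [hT, polyOp_apply hX Q _ (fun n hn => Set.indicator_of_notMem hn _),
      Set.indicator_of_mem hn]
    refine Finset.sum_congr rfl fun k hk => ?_
    rw [hψq k (monotone_le hX (Finset.mem_Iic.1 hk) hn)]
    beta_reduce
    rw [Set.indicator_of_mem (monotone_le hX tsub_le_self hn)]
  refine ⟨ψ, fun a ha => (hmult a ha).1, ?_, ?_, ?_⟩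
  · exact csInf_le ⟨0, fun _ h => h.1⟩ ⟨hN0, fun a ha => (hmult a ha).2⟩
  · intro f hf g _
    unfold hdInner
    refine tsum_congr fun n => ?_
    by_cases hn : n ∈ X
    · rw [hconv g n hn]
    · simp [hf.1 n hn]
  · have heq : ∀ a, MemHdX d X a → T a = X.indicator (mconv d ψ a) := by
      intro a ha
      have hia : X.indicator a = a := by
        funext n
        by_cases hn : n ∈ X
        · rw [Set.indicator_of_mem hn]
        · rw [Set.indicator_of_notMem hn, ha.1 n hn]
      funext n
      by_cases hn : n ∈ X
      · rw [Set.indicator_of_mem hn, hconv a n hn, hia]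
      · rw [Set.indicator_of_notMem hn, hT, polyOp_apply hX Q a ha.1,
          Set.indicator_of_notMem hn]
    rw [hNdef]
    unfold opNormHdX
    congr 1
    ext C'
    refine and_congr Iff.rfl (forall_congr' fun a => forall_congr' fun ha => ?_)
    rw [heq a ha]

end DruryArveson
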